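/- Let H = (1/√2)·[[1, 1], [1, −1]] be the 2×2 Hadamard matrix. Then the set of monomial unitary 2×2 complex matrices U such that H U H⁻¹ is monomial equals the set {λ·P : λ ∈ ℂ, |λ| = 1, P ∈ {[[1,0],[0,1]], [[1,0],[0,−1]], [[0,1],[1,0]], [[0,−1],[1,0]]}}, i.e., the single-qubit Pauli group up to phase. -/

import Mathlib

open scoped Matrix

/-- A square matrix is monomial if every row and every column contains exactly one
nonzero entry. -/
def Matrix.IsMonomial {n : Type*} [Fintype n] (M : Matrix n n ℂ) : Prop :=
  (∀ i, ∃! j, M i j ≠ 0) ∧ (∀ j, ∃! i, M i j ≠ 0)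

/-- Explicit description of `2 × 2` monomial matrices. -/
theorem isMonomial_two_iff (M : Matrix (Fin 2) (Fin 2) ℂ) :
    M.IsMonomial ↔ (M 0 0 ≠ 0 ∧ M 1 1 ≠ 0 ∧ M 0 1 = 0 ∧ M 1 0 = 0) ∨
      (M 0 0 = 0 ∧ M 1 1 = 0 ∧ M 0 1 ≠ 0 ∧ M 1 0 ≠ 0) := by
  simp only [Matrix.IsMonomial, ExistsUnique, Fin.forall_fin_two, Fin.exists_fin_two]
  by_cases h1 : M 0 0 = 0 <;> by_cases h2 : M 0 1 = 0 <;> by_cases h3 : M 1 0 = 0 <;>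
    by_cases h4 : M 1 1 = 0 <;> simp [h1, h2, h3, h4]

/-- Conjugation by the Hadamard matrix, computed. -/
theorem hadamard_conj (H : Matrix (Fin 2) (Fin 2) ℂ)
    (hH : H = ((Real.sqrt 2 : ℂ))⁻¹ • !![1, 1; 1, -1]) (a b c d : ℂ) :
    H * !![a, b; c, d] * H⁻¹ =
      !![(a + b + c + d) / 2, (a - b + c - d) / 2;
         (a + b - c - d) / 2, (a - b - c + d) / 2] := by
  have h2 : ((Real.sqrt 2 : ℂ))⁻¹ * ((Real.sqrt 2 : ℂ))⁻¹ = 1 / 2 := by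
    rw [← mul_inv, ← Complex.ofReal_mul, Real.mul_self_sqrt (by norm_num)]
    norm_num
  have hHH : H * H = 1 := by
    rw [hH, Matrix.smul_mul, Matrix.mul_smul, smul_smul, h2]
    ext i j
    fin_cases i <;> fin_cases j <;> simp [Matrix.mul_apply, Fin.sum_univ_two] <;> norm_num
  rw [Matrix.inv_eq_left_inv hHH, hH, Matrix.smul_mul, Matrix.smul_mul, Matrix.mul_smul,
    smul_smul, h2]
  ext i j
  fin_cases i <;> fin_cases j <;> simp [Matrix.mul_apply, Fin.sum_univ_two] <;> ring

/-- Unitarity for explicit `2 × 2` matrices. -/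
theorem unitary_two_iff (a b c d : ℂ) :
    !![a, b; c, d] ∈ Matrix.unitaryGroup (Fin 2) ℂ ↔
      (a * star a + b * star b = 1 ∧ a * star c + b * star d = 0) ∧
      (c * star a + d * star b = 0 ∧ c * star c + d * star d = 1) := by
  rw [Matrix.mem_unitaryGroup_iff, ← Matrix.ext_iff]
  simp [Fin.forall_fin_two, Matrix.mul_apply, Fin.sum_univ_two, Matrix.star_apply]

theorem norm_one_iff (z : ℂ) : z * star z = 1 ↔ ‖z‖ = 1 := by
  have : z * star z = ((‖z‖ ^ 2 : ℝ) : ℂ) := by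
    simpa using Complex.mul_conj' z
  rw [this, Complex.ofReal_eq_one]
  constructor
  · intro h
    nlinarith [norm_nonneg z]
  · intro h
    rw [h, one_pow]

/-- **Ising intertwiners of the Hadamard `F`-move are the Pauli group.**
With `H = (1/√2) [[1, 1], [1, −1]]`, the monomial unitary `2 × 2` matrices `U` such
that `H U H⁻¹` is monomial are exactly the unimodular multiples of the four matrices
`[[1,0],[0,1]]`, `[[1,0],[0,−1]]`, `[[0,1],[1,0]]`, `[[0,−1],[1,0]]`, i.e., the
single-qubit Pauli group up to phase. -/
theorem ising_hadamard_intertwiners_are_pauli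
    (H : Matrix (Fin 2) (Fin 2) ℂ)
    (hH : H = ((Real.sqrt 2 : ℂ))⁻¹ • !![1, 1; 1, -1]) :
    {U : Matrix (Fin 2) (Fin 2) ℂ |
        U ∈ Matrix.unitaryGroup (Fin 2) ℂ ∧ U.IsMonomial ∧ (H * U * H⁻¹).IsMonomial} =
      {U : Matrix (Fin 2) (Fin 2) ℂ | ∃ lam : ℂ, ‖lam‖ = 1 ∧
        (U = lam • !![1, 0; 0, 1] ∨ U = lam • !![1, 0; 0, -1] ∨
          U = lam • !![0, 1; 1, 0] ∨ U = lam • !![0, -1; 1, 0])} := by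
  ext U
  obtain ⟨a, b, c, d, rfl⟩ : ∃ a b c d, U = !![a, b; c, d] :=
    ⟨_, _, _, _, Matrix.eta_fin_two U⟩
  simp only [Set.mem_ofPred_eq]
  rw [hadamard_conj H hH, unitary_two_iff, isMonomial_two_iff, isMonomial_two_iff]
  simp only [Matrix.smul_of, Matrix.smul_cons, Matrix.smul_empty, smul_eq_mul,
    mul_one, mul_zero, mul_neg, Matrix.of_apply, Matrix.cons_val', Matrix.cons_val_zero,
    Matrix.cons_val_one, Matrix.cons_val_fin_one]
  have key : ∀ p q r s : ℂ, !![a, b; c, d] = !![p, q; r, s] ↔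
      (a = p ∧ b = q) ∧ (c = r ∧ d = s) := by
    intro p q r s
    rw [← Matrix.ext_iff]
    simp [Fin.forall_fin_two]
  simp only [key]
  constructor
  · rintro ⟨⟨⟨h1, -⟩, -, h4⟩, ⟨ha, hd, rfl, rfl⟩ | ⟨rfl, rfl, hb, hc⟩, hm⟩
    · refine ⟨a, (norm_one_iff a).1 (by simpa using h1), ?_⟩
      rcases hm with ⟨-, -, h, -⟩ | ⟨h, -⟩
      · left
        refine ⟨⟨rfl, rfl⟩, rfl, ?_⟩
        linear_combination (-2) * h
      · right; left
        refine ⟨⟨rfl, rfl⟩, rfl, ?_⟩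
        linear_combination 2 * h
    · refine ⟨c, (norm_one_iff c).1 (by simpa using h4), ?_⟩
      rcases hm with ⟨-, -, h, -⟩ | ⟨h, -⟩
      · right; right; left
        refine ⟨⟨rfl, ?_⟩, rfl, rfl⟩
        linear_combination (-2) * h
      · right; right; right
        refine ⟨⟨rfl, ?_⟩, rfl, rfl⟩
        linear_combination 2 * h
  · rintro ⟨l, hl, h⟩
    have hl0 : l ≠ 0 := by
      rintro rfl
      simp at hl
    have hn : ¬(-l - l = 0) := fun h => hl0 (by linear_combination (-1 / 2) * h)
    have hs := (norm_one_iff l).2 hl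
    simp only [Complex.star_def] at hs
    rcases h with ⟨⟨rfl, rfl⟩, rfl, rfl⟩ | ⟨⟨rfl, rfl⟩, rfl, rfl⟩ | ⟨⟨rfl, rfl⟩, rfl, rfl⟩ |
      ⟨⟨h1, rfl⟩, rfl, h4⟩ <;> simp [*]
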